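/- Let m and δ be positive integers with d = δ mod 2m satisfying d ≤ m, let S = {m, m+δ, 2m+δ}, and let a = (δ − d)/(2m) + 1 (note that 2m divides δ − d). Then for all integers j and r with 0 ≤ j < 2a and 1 ≤ r ≤ m, v_S(j·m + r) = 1 if j is even and v_S(j·m + r) = 2 if j is odd. (This is the initial factor (1^m 2^m)^a of the period.) -/

import Mathlib

/-- The minimum excludant of a finite set of naturals. -/
noncomputable def mex (A : Finset ℕ) : ℕ := sInf {n : ℕ | n ∉ A}

/-- The sink-subtraction nim-value function: `sinkVal S 0 = 0`, and for `x ≥ 1`,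
`sinkVal S x = mex { sinkVal S (x ∸ s) : s ∈ S }` (when every `s ∈ S` is positive,
since `(x+1) - s = x - (s-1)` in truncated subtraction). -/
noncomputable def sinkVal (S : Finset ℕ) : ℕ → ℕ
  | 0 => 0
  | x + 1 => mex (S.image fun s => sinkVal S (x - (s - 1)))
termination_by x => x
decreasing_by omega

theorem mex_eq_of (A : Finset ℕ) (n : ℕ) (h1 : n ∉ A) (h2 : ∀ k < n, k ∈ A) : mex A = n := by
  unfold mex
  apply le_antisymm
  · exact Nat.sInf_le h1
  · by_contra h
    push Not at h
    have := Nat.sInf_mem (s := {n : ℕ | n ∉ A}) ⟨n, h1⟩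
    exact this (h2 _ h)

theorem sinkVal_zero (S : Finset ℕ) : sinkVal S 0 = 0 := by
  rw [sinkVal]

theorem sinkVal_pos (m δ x : ℕ) (hm : 0 < m) (hx : 0 < x) :
    sinkVal {m, m + δ, 2 * m + δ} x =
      mex {sinkVal {m, m + δ, 2 * m + δ} (x - m), sinkVal {m, m + δ, 2 * m + δ} (x - (m + δ)),
        sinkVal {m, m + δ, 2 * m + δ} (x - (2 * m + δ))} := by
  obtain ⟨y, rfl⟩ : ∃ y, x = y + 1 := ⟨x - 1, by omega⟩
  have e1 : y - (m - 1) = y + 1 - m := by omega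
  have e2 : y - (m + δ - 1) = y + 1 - (m + δ) := by omega
  have e3 : y - (2 * m + δ - 1) = y + 1 - (2 * m + δ) := by omega
  rw [sinkVal]
  simp only [Finset.image_insert, Finset.image_singleton, e1, e2, e3]

theorem mex_one (b : ℕ) (hb : b ≠ 1) : mex {b, 0, 0} = 1 := by
  apply mex_eq_of
  · simp; omega
  · intro k hk; simp; omega

theorem mex_two (b : ℕ) (hb : b ≤ 1) : mex {1, b, 0} = 2 := by
  apply mex_eq_of
  · simp; omega
  · intro k hk; simp; omega

theorem stmt8 (m δ : ℕ) (hm : 0 < m) (hδ : 0 < δ)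
    (S : Finset ℕ) (hS : S = {m, m + δ, 2 * m + δ})
    (d : ℕ) (hd : d = δ % (2 * m)) (hdm : d ≤ m)
    (a : ℕ) (ha : a = (δ - d) / (2 * m) + 1) :
    ∀ j r : ℕ, j < 2 * a → 1 ≤ r → r ≤ m →
      (Even j → sinkVal S (j * m + r) = 1) ∧
      (¬ Even j → sinkVal S (j * m + r) = 2) := by
  subst hS
  obtain ⟨k, hk, hak⟩ : ∃ k, δ = 2 * (k * m) + d ∧ a = k + 1 := by
    have h := Nat.div_add_mod δ (2 * m)
    rw [← hd] at h
    refine ⟨δ / (2 * m), by nlinarith, ?_⟩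
    rw [ha]
    have : δ - d = 2 * m * (δ / (2 * m)) := by omega
    rw [this, Nat.mul_div_cancel_left _ (by omega)]
  have hsmall : ∀ x, 1 ≤ x → x ≤ m → sinkVal {m, m + δ, 2 * m + δ} x = 1 := by
    intro x h1 h2
    rw [sinkVal_pos m δ x hm h1, show x - m = 0 by omega, show x - (m + δ) = 0 by omega,
      show x - (2 * m + δ) = 0 by omega, sinkVal_zero]
    exact mex_one 0 (by omega)
  intro j
  induction j with
  | zero =>
    intro r _ h1 h2
    refine ⟨fun _ => ?_, fun h => absurd Even.zero h⟩
    rw [zero_mul, zero_add]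
    exact hsmall r h1 h2
  | succ j ih =>
    intro r hj h1 h2
    obtain ⟨ihe, iho⟩ := ih r (by omega) h1 h2
    have hb : j * m ≤ 2 * (k * m) := by
      have : j ≤ 2 * k := by omega
      nlinarith [Nat.mul_le_mul_right m this]
    have hx : (j + 1) * m + r = j * m + m + r := by ring
    rw [hx, sinkVal_pos m δ _ hm (by omega), show j * m + m + r - m = j * m + r by omega,
      show j * m + m + r - (2 * m + δ) = 0 by omega, sinkVal_zero]
    constructor
    · intro he
      have ho : ¬ Even j := by rwa [Nat.even_add_one] at he
      have hb' : j * m + m ≤ 2 * (k * m) := by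
        have : j + 1 ≤ 2 * k := by
          rcases he with ⟨t, ht⟩
          omega
        nlinarith [Nat.mul_le_mul_right m this]
      rw [show j * m + m + r - (m + δ) = 0 by omega, sinkVal_zero, iho ho]
      exact mex_one 2 (by omega)
    · intro ho
      have he : Even j := by rwa [Nat.even_add_one, not_not] at ho
      rw [ihe he]
      apply mex_two
      rcases Nat.eq_zero_or_pos (j * m + m + r - (m + δ)) with h0 | h0
      · rw [h0, sinkVal_zero]; omega
      · rw [hsmall _ h0 (by omega)]
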